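/- Let N = A₁, …, A_K be a network of timed automata with variables and η a trace of N with configurations (l_h, v_var,h, v_h) for h ∈ ℕ. Then for every h ∈ ℕ and every 1 ≤ k ≤ K, the invariant Inv_k(l_h[k]) of the location occupied by A_k in the h-th configuration is weakly satisfied by some clock valuation; in particular, Inv_k(l_h[k]) contains no positive literal of the form x = d. (Equivalently: a location whose invariant contains a conjunct x = d is never occupied along any trace, since time strictly progresses.) -/

import Mathlib

/-!
In a trace no two discrete transitions are adjacent and the first event is a delay, so every
configuration is an endpoint of some time transition: either the event leaving it is a delay, or it
is not the initial configuration and the event entering it is a delay. A time transition keeps all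
locations fixed, and its final clock valuation weakly satisfies their invariants
(`TATrace.exists_ccWSat`). A positive literal `x = d` is never weakly satisfied, so it cannot occur
in such an invariant (`ccWSat.cmp_ne_eq`).
-/

open scoped NNReal

namespace TAMC

/-! ### Clock constraints: atoms `x < d`, `x = d`, `x > d` and their negations,
    classical satisfaction `⊨` and weak satisfaction `⊨_w`. -/

/-- Comparison operators `<`, `=`, `>` appearing in clock atoms. -/
inductive CCmp where
  | lt | eq | gt
deriving DecidableEq

def CCmp.holds : CCmp → ℝ≥0 → ℝ≥0 → Prop
  | .lt, a, b => a < b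
  | .eq, a, b => a = b
  | .gt, a, b => b < a

/-- A literal of a clock constraint: an atom `x ∼ d` (`pos = true`)
    or a negated atom `¬(x ∼ d)` (`pos = false`). -/
structure ClockLit (X : Type) where
  pos : Bool
  x : X
  cmp : CCmp
  d : ℕ

/-- A clock constraint: a finite conjunction of literals. -/
abbrev ClockConstraint (X : Type) := List (ClockLit X)

/-- A clock valuation `v : X → ℝ≥0`. -/
abbrev ClockVal (X : Type) := X → ℝ≥0

/-- Classical satisfaction of a literal. -/
def ClockLit.sat {X : Type} (v : ClockVal X) (l : ClockLit X) : Prop :=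
  if l.pos then l.cmp.holds (v l.x) (l.d : ℝ≥0) else ¬ l.cmp.holds (v l.x) (l.d : ℝ≥0)

/-- Weak satisfaction of a literal:
`v ⊨_w x < d` iff `v x ≤ d`; `v ⊨_w x > d` iff `v x ≥ d`; `v ⊨_w x = d` never;
`v ⊨_w ¬(x ∼ d)` iff `¬ (v x ∼ d)` for `∼ ∈ {<, >}`; `v ⊨_w ¬(x = d)` always. -/
def ClockLit.wsat {X : Type} (v : ClockVal X) (l : ClockLit X) : Prop :=
  if l.pos then
    match l.cmp with
    | .lt => v l.x ≤ (l.d : ℝ≥0)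
    | .eq => False
    | .gt => (l.d : ℝ≥0) ≤ v l.x
  else
    match l.cmp with
    | .eq => True
    | .lt => ¬ (v l.x < (l.d : ℝ≥0))
    | .gt => ¬ ((l.d : ℝ≥0) < v l.x)

/-- `v ⊨ γ` : classical satisfaction of a clock constraint (componentwise on literals). -/
def ccSat {X : Type} (v : ClockVal X) (γ : ClockConstraint X) : Prop :=
  ∀ l ∈ γ, l.sat v

/-- `v ⊨_w γ` : weak satisfaction of a clock constraint (componentwise on literals). -/
def ccWSat {X : Type} (v : ClockVal X) (γ : ClockConstraint X) : Prop :=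
  ∀ l ∈ γ, l.wsat v

/-- `(v + r) x = v x + r`. -/
def ClockVal.shift {X : Type} (v : ClockVal X) (r : ℝ≥0) : ClockVal X :=
  fun x => v x + r

/-! ### Timed automata with variables, networks, configurations and transitions. -/

/-- Arithmetic expressions over integer variables and constants in `ℤ`. -/
inductive IntExpr (V : Type) where
  | const (c : ℤ)
  | var (n : V)
  | add (a b : IntExpr V)
  | neg (a : IntExpr V)
  | mul (a b : IntExpr V)

def IntExpr.eval {V : Type} (ν : V → ℤ) : IntExpr V → ℤ
  | .const c => c
  | .var n => ν n
  | .add a b => a.eval ν + b.eval ν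
  | .neg a => - a.eval ν
  | .mul a b => a.eval ν * b.eval ν

/-- Variable constraints `γ ::= n ∼ c | n ∼ n' | ¬γ | γ ∧ γ` with `∼ ∈ {<, =}`. -/
inductive VarConstraint (V : Type) where
  | ltC (n : V) (c : ℤ)
  | eqC (n : V) (c : ℤ)
  | ltV (n m : V)
  | eqV (n m : V)
  | not (g : VarConstraint V)
  | and (g h : VarConstraint V)

def VarConstraint.sat {V : Type} (ν : V → ℤ) : VarConstraint V → Prop
  | .ltC n c => ν n < c
  | .eqC n c => ν n = c
  | .ltV n m => ν n < ν m
  | .eqV n m => ν n = ν m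
  | .not g => ¬ g.sat ν
  | .and g h => g.sat ν ∧ h.sat ν

/-- A transition `t = (q, q′, γ, ξ, α, ζ, μ)` of a timed automaton with variables.
`E` is the type of event labels decorating transitions. -/
structure TATransition (X E V Q : Type) where
  src : Q
  tgt : Q
  guard : ClockConstraint X
  vguard : VarConstraint V
  event : E
  resets : List X
  assigns : List (V × IntExpr V)

/-- `U(t)`: the variables assigned by the assignment set of `t`. -/
def TATransition.updated {X E V Q : Type} (t : TATransition X E V Q) : List V :=
  t.assigns.map Prod.fst

/-- A timed automaton with variables (the shared components `AP`, `X`, `E`, `V`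
are type parameters; the initial variable valuation is that of the network). -/
structure TimedAutomaton (AP X E V Q : Type) where
  init : Q
  inv : Q → ClockConstraint X
  label : Q → Finset AP
  trans : List (TATransition X E V Q)

/-- Edge tags: `ei` (excluded-included, open-closed `α⁾⁽ᵉⁱ⁾ = α^{)[}`) and
`ie` (included-excluded, closed-open `α^{](}`). -/
inductive EdgeTag where
  | ei | ie
deriving DecidableEq

/-- A vector `Λ` labelling a discrete transition: `Λ[k] = some (α, b)` means the
`k`-th automaton fires a transition labelled `α` with edge tag `b`;
`Λ[k] = none` is the symbol `_` (the automaton does not move). -/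
abbrev SyncVec (E : Type) (K : ℕ) := Fin K → Option (E × EdgeTag)

/-- A configuration `(l, v_var, v)` of a network of `K` timed automata with
location types `Q k`. -/
structure TAConfig {K : ℕ} (Q : Fin K → Type) (X V : Type) where
  loc : ∀ k, Q k
  varVal : V → ℤ
  clockVal : ClockVal X

/-- The configuration obtained by letting `δ` time units elapse. -/
def TAConfig.shift {K : ℕ} {Q : Fin K → Type} {X V : Type}
    (c : TAConfig Q X V) (δ : ℝ≥0) : TAConfig Q X V :=
  { c with clockVal := c.clockVal.shift δ }

section Semantics

variable {AP X E V : Type} {K : ℕ} {Q : Fin K → Type}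

/-- Time transition `(l, v_var, v) →^δ (l, v_var, v + δ)` (Def. of configuration
changes, case 2). -/
def TimeStep (N : ∀ k, TimedAutomaton AP X E V (Q k)) (δ : ℝ≥0)
    (c c' : TAConfig Q X V) : Prop :=
  0 < δ ∧ c'.loc = c.loc ∧ c'.varVal = c.varVal ∧
    c'.clockVal = c.clockVal.shift δ ∧
    ∀ k, ccWSat c'.clockVal ((N k).inv (c.loc k))

/-- `t` witnesses the configuration change of automaton `k` on label `α` with
edge tag `b` (Def. of configuration changes, case 1a). -/
def TransWitness (N : ∀ k, TimedAutomaton AP X E V (Q k)) (k : Fin K)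
    (t : TATransition X E V (Q k)) (α : E) (b : EdgeTag)
    (c c' : TAConfig Q X V) : Prop :=
  t.event = α ∧ t.src = c.loc k ∧ t.tgt = c'.loc k ∧
  ccSat c.clockVal t.guard ∧ t.vguard.sat c.varVal ∧
  (∀ x ∈ t.resets, c'.clockVal x = 0) ∧
  (∀ a ∈ t.assigns, c'.varVal a.1 = a.2.eval c.varVal) ∧
  (match b with
   | .ei => ccWSat c.clockVal ((N k).inv (c.loc k)) ∧
            ccSat c'.clockVal ((N k).inv (c'.loc k))
   | .ie => ccSat c.clockVal ((N k).inv (c.loc k)) ∧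
            ccWSat c'.clockVal ((N k).inv (c'.loc k)))

/-- A choice of taken transition (an index into the transition list) for each
automaton that moves. -/
abbrev TrChoice (N : ∀ k, TimedAutomaton AP X E V (Q k)) :=
  ∀ k : Fin K, Option (Fin ((N k).trans.length))

/-- Discrete transition `(l, v_var, v) →^Λ (l', v'_var, v')` realized through the
choice `tr` of taken transitions (Def. of configuration changes, case 1). -/
def DiscreteStepVia (N : ∀ k, TimedAutomaton AP X E V (Q k)) (tr : TrChoice N)
    (Λ : SyncVec E K) (c c' : TAConfig Q X V) : Prop :=
  (∀ k, Λ k = none ↔ tr k = none) ∧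
  (∀ k αb, Λ k = some αb → ∃ i, tr k = some i ∧
      TransWitness N k ((N k).trans.get i) αb.1 αb.2 c c') ∧
  (∀ k, Λ k = none → c'.loc k = c.loc k ∧
      ccSat c.clockVal ((N k).inv (c.loc k)) ∧
      ccSat c'.clockVal ((N k).inv (c'.loc k))) ∧
  (∀ x, (∀ k i, tr k = some i → x ∉ ((N k).trans.get i).resets) →
      c'.clockVal x = c.clockVal x) ∧
  (∀ n, (∀ k i, tr k = some i → n ∉ ((N k).trans.get i).updated) →
      c'.varVal n = c.varVal n)

/-- Discrete transition `(l, v_var, v) →^Λ (l', v'_var, v')`. -/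
def DiscreteStep (N : ∀ k, TimedAutomaton AP X E V (Q k)) (Λ : SyncVec E K)
    (c c' : TAConfig Q X V) : Prop :=
  ∃ tr, DiscreteStepVia N tr Λ c c'

end Semantics

section Traces

variable {AP X E V : Type} {K : ℕ} {Q : Fin K → Type}

/-- An event of a trace: either a delay `δ ∈ ℝ>0` or a discrete vector `Λ`. -/
inductive NetEvent (E : Type) (K : ℕ) where
  | delay (δ : ℝ≥0)
  | disc (Λ : SyncVec E K)

/-- The configuration change induced by an event. -/
def NetStep (N : ∀ k, TimedAutomaton AP X E V (Q k)) :
    NetEvent E K → TAConfig Q X V → TAConfig Q X V → Prop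
  | .delay δ => TimeStep N δ
  | .disc Λ => DiscreteStep N Λ

/-- A trace of a network of timed automata with variables (Def. of traces):
an infinite sequence of configuration changes such that the first event is a
time transition, the initial configuration is as prescribed (initial locations,
clocks all `0`, initial variable valuation `v0`, invariants satisfied), and
every discrete transition is immediately followed by a time transition. -/
structure TATrace (N : ∀ k, TimedAutomaton AP X E V (Q k)) (v0 : V → ℤ) where
  cfg : ℕ → TAConfig Q X V
  ev : ℕ → NetEvent E K
  step : ∀ h, NetStep N (ev h) (cfg h) (cfg (h + 1))
  first_delay : ∃ δ, ev 0 = NetEvent.delay δ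
  init_loc : ∀ k, (cfg 0).loc k = (N k).init
  init_clock : ∀ x, (cfg 0).clockVal x = 0
  init_var : (cfg 0).varVal = v0
  init_inv : ∀ k, ccSat (cfg 0).clockVal ((N k).inv ((cfg 0).loc k))
  disc_then_delay : ∀ h Λ, ev h = NetEvent.disc Λ → ∃ δ, ev (h + 1) = NetEvent.delay δ

end Traces

theorem ccWSat.cmp_ne_eq {X : Type} {v : ClockVal X} {γ : ClockConstraint X}
    (hv : ccWSat v γ) {l : ClockLit X} (hl : l ∈ γ) (hpos : l.pos = true) :
    l.cmp ≠ CCmp.eq := by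
  intro hcmp
  have hw := hv l hl
  simp [ClockLit.wsat, hpos, hcmp] at hw

/-- The witness is the final valuation of a time transition having `η.cfg h` as an endpoint; it need
not be the valuation of `η.cfg h` itself. -/
theorem TATrace.exists_ccWSat {AP X E V : Type} {K : ℕ} {Q : Fin K → Type}
    {N : ∀ k, TimedAutomaton AP X E V (Q k)} {v0 : V → ℤ} (η : TATrace N v0) (h : ℕ) :
    ∃ v : ClockVal X, ∀ k, ccWSat v ((N k).inv ((η.cfg h).loc k)) := by
  have hstep := η.step h
  cases hev : η.ev h with
  | delay δ =>
    rw [hev] at hstep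
    obtain ⟨-, -, -, -, hw⟩ := hstep
    exact ⟨_, hw⟩
  | disc Λ =>
    cases h with
    | zero =>
      obtain ⟨δ, hδ⟩ := η.first_delay
      simp [hev] at hδ
    | succ m =>
      have hprev := η.step m
      cases hm : η.ev m with
      | delay δ =>
        rw [hm] at hprev
        obtain ⟨-, hloc, -, -, hw⟩ := hprev
        exact ⟨_, by rw [hloc]; exact hw⟩
      | disc Λ' =>
        obtain ⟨δ, hδ⟩ := η.disc_then_delay m Λ' hm
        simp [hev] at hδ

/-- **Statement 9.** Along any trace of a network of TA, the invariant of the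
location occupied by each automaton in each configuration is weakly satisfied by
some clock valuation; in particular it contains no positive literal `x = d`. -/
theorem trace_inv_weakly_satisfiable {AP X E V : Type} {K : ℕ} {Q : Fin K → Type}
    (N : ∀ k, TimedAutomaton AP X E V (Q k)) (v0 : V → ℤ)
    (η : TATrace N v0) :
    ∀ (h : ℕ) (k : Fin K),
      (∃ v : ClockVal X, ccWSat v ((N k).inv ((η.cfg h).loc k))) ∧
      (∀ l ∈ (N k).inv ((η.cfg h).loc k), l.pos = true → l.cmp ≠ CCmp.eq) := by
  intro h k
  obtain ⟨v, hv⟩ := η.exists_ccWSat h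
  exact ⟨⟨v, hv k⟩, fun _ hl hpos => (hv k).cmp_ne_eq hl hpos⟩

end TAMC
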